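/- In the online Ramsey game with targets red C₄ and blue P₆, consider the position in which the five edges v₁v₂, v₂v₃, v₃v₄, v₄v₅, v₅v₆ of a path on six distinct vertices have been colored blue, blue, red, blue, red respectively (case B6). From this position Builder can force a red copy of C₄ or a blue copy of P₆ within at most 6 additional rounds, so within at most 11 rounds in total. -/

import Mathlib

open SimpleGraph

/-- The set `S` of edges of the infinite complete graph on `ℕ` contains a copy of
the graph `G`: there is an injective map of the vertices of `G` into `ℕ` sending
every edge of `G` into `S`. -/
def HasCopy {V : Type*} (G : SimpleGraph V) (S : Set (Sym2 ℕ)) : Prop :=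
  ∃ f : V → ℕ, Function.Injective f ∧ ∀ a b, G.Adj a b → s(f a, f b) ∈ S

/-- `BuilderWinsIn G H R B r` means: in the online Ramsey game with targets a red copy
of `G` and a blue copy of `H`, from the position in which the edges in `R` have been
colored red and the edges in `B` have been colored blue, Builder has a strategy that
guarantees, against every Painter strategy, that within at most `r` further rounds the
colored edges contain a red copy of `G` or a blue copy of `H`.  (In each round Builder
chooses a previously unchosen non-loop edge of the infinite complete graph on `ℕ`, and
Painter immediately colors it red or blue; so Builder wins within `r + 1` rounds iff he
has already won, or he can choose an edge such that whichever color Painter gives it,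
he can win within `r` further rounds.) -/
def BuilderWinsIn {V W : Type*} (G : SimpleGraph V) (H : SimpleGraph W) :
    Set (Sym2 ℕ) → Set (Sym2 ℕ) → ℕ → Prop
  | R, B, 0 => HasCopy G R ∨ HasCopy H B
  | R, B, (r + 1) => HasCopy G R ∨ HasCopy H B ∨
      ∃ e : Sym2 ℕ, ¬ e.IsDiag ∧ e ∉ R ∧ e ∉ B ∧
        BuilderWinsIn G H (insert e R) B r ∧ BuilderWinsIn G H R (insert e B) r

/-- The online size Ramsey number `ř(G, H)`: the least `t` such that, starting from the
empty position, Builder can force a red copy of `G` or a blue copy of `H` within at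
most `t` rounds. -/
noncomputable def onlineRamsey {V W : Type*} (G : SimpleGraph V) (H : SimpleGraph W) : ℕ :=
  sInf {t | BuilderWinsIn G H ∅ ∅ t}

/-!
If a blue path has ends `a ≠ b`, Builder plays the four edges of a cycle `a x b y` with `x`, `y` off
the path: each of them lengthens the path if it is blue, and if all are red they form a red `C₄`.

In case `B6` Builder plays `v₅v₁` and then `v₄v₁`. As soon as one of them is blue, it joins
`v₁v₂v₃` and `v₄v₅` to a single blue path, and Builder proceeds as above, one round faster after
`v₄v₁` because `v₅v₆` is already red. If both are red, there is a red path `v₃v₄v₁v₅v₆`. Then `v₅v₃`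
has to be blue, and `v₆v₄` completes the red cycle `v₄v₁v₅v₆` or the blue path `v₆v₄v₅v₃v₂v₁`.
-/

section HasCopy

variable {S T : Set (Sym2 ℕ)} {l : List ℕ} {a b c d x : ℕ}

/-- The vertices of `l`, in order, form a path with all edges in `S`; recording a monochromatic path
by its list of vertices lets it be extended at its first vertex by `List.cons`. -/
def IsPathIn (S : Set (Sym2 ℕ)) (l : List ℕ) : Prop :=
  l.Nodup ∧ l.IsChain fun a b => s(a, b) ∈ S

theorem IsPathIn.mono (hST : S ⊆ T) (h : IsPathIn S l) : IsPathIn T l :=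
  ⟨h.1, h.2.imp fun _ _ hab => hST hab⟩

theorem IsPathIn.reverse (h : IsPathIn S (a :: (l ++ [b]))) :
    IsPathIn S (b :: (l.reverse ++ [a])) := by
  have hrev : (a :: (l ++ [b])).reverse = b :: (l.reverse ++ [a]) := by simp
  rw [← hrev]
  exact ⟨List.nodup_reverse.2 h.1,
    List.isChain_reverse.2 <| h.2.imp fun _ _ huv => Sym2.eq_swap ▸ huv⟩

theorem IsPathIn.ends_ne (h : IsPathIn S (a :: (l ++ [b]))) : a ≠ b := by
  rintro rfl
  exact (List.nodup_cons.1 h.1).1 (by simp)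

theorem IsPathIn.cons (h : IsPathIn S (a :: l)) (hx : x ∉ a :: l) (hxa : s(x, a) ∈ S) :
    IsPathIn S (x :: a :: l) :=
  ⟨List.nodup_cons.2 ⟨hx, h.1⟩, List.isChain_cons_cons.2 ⟨hxa, h.2⟩⟩

theorem IsPathIn.cons_insert (h : IsPathIn S (a :: l)) (hx : x ∉ a :: l) :
    IsPathIn (insert s(x, a) S) (x :: a :: l) :=
  (h.mono (Set.subset_insert _ _)).cons hx (Set.mem_insert _ _)

theorem IsPathIn.hasCopy (h : IsPathIn S l) {n : ℕ} (hn : l.length = n) :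
    HasCopy (pathGraph n) S := by
  subst hn
  have hstep : ∀ i j : Fin l.length, i.val + 1 = j.val → s(l.get i, l.get j) ∈ S := by
    rintro ⟨i, _⟩ ⟨_, hj⟩ rfl
    exact List.isChain_iff_getElem.1 h.2 i hj
  refine ⟨l.get, List.nodup_iff_injective_get.1 h.1, fun i j hij => ?_⟩
  rcases pathGraph_adj.1 hij with hij | hji
  · exact hstep i j hij
  · exact Sym2.eq_swap ▸ hstep j i hji

theorem hasCopy_cycleGraph_four (hnodup : [a, b, c, d].Nodup) (hab : s(a, b) ∈ S)
    (hbc : s(b, c) ∈ S) (hcd : s(c, d) ∈ S) (hda : s(d, a) ∈ S) :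
    HasCopy (cycleGraph 4) S := by
  have hstep : ∀ i : Fin 4, s(![a, b, c, d] i, ![a, b, c, d] (i + 1)) ∈ S := by
    simpa [Fin.forall_fin_succ] using ⟨hab, hbc, hcd, hda⟩
  refine ⟨![a, b, c, d], List.nodup_ofFn.1 (by simpa using hnodup), fun i j hij => ?_⟩
  rcases cycleGraph_adj.1 hij with h | h
  · obtain rfl : i = j + 1 := by rw [← h]; abel
    exact Sym2.eq_swap ▸ hstep j
  · obtain rfl : j = i + 1 := by rw [← h]; abel
    exact hstep i

end HasCopy

namespace BuilderWinsIn

section Moves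

variable {V W : Type*} {G : SimpleGraph V} {H : SimpleGraph W} {R B : Set (Sym2 ℕ)} {r : ℕ}
  {u v : ℕ}

theorem of_hasCopy_red (h : HasCopy G R) : BuilderWinsIn G H R B r := by
  cases r <;> exact Or.inl h

theorem of_hasCopy_blue (h : HasCopy H B) : BuilderWinsIn G H R B r := by
  cases r
  · exact Or.inr h
  · exact Or.inr (Or.inl h)

theorem succ (h : BuilderWinsIn G H R B r) : BuilderWinsIn G H R B (r + 1) := by
  induction r generalizing R B with
  | zero => exact h.elim of_hasCopy_red of_hasCopy_blue
  | succ r ih =>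
    rcases h with hR | hB | ⟨e, he, heR, heB, hred, hblue⟩
    · exact of_hasCopy_red hR
    · exact of_hasCopy_blue hB
    · exact Or.inr (Or.inr ⟨e, he, heR, heB, ih hred, ih hblue⟩)

/-- If `s(u, v)` is already colored, one of the two continuations starts from the present position,
so Builder can skip the round. -/
theorem play (huv : u ≠ v) (hred : BuilderWinsIn G H (insert s(u, v) R) B r)
    (hblue : BuilderWinsIn G H R (insert s(u, v) B) r) : BuilderWinsIn G H R B (r + 1) := by
  by_cases hR : s(u, v) ∈ R
  · exact (Set.insert_eq_of_mem hR ▸ hred).succ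
  by_cases hB : s(u, v) ∈ B
  · exact (Set.insert_eq_of_mem hB ▸ hblue).succ
  exact Or.inr (Or.inr ⟨s(u, v), huv, hR, hB, hred, hblue⟩)

theorem force_red (huv : u ≠ v) (hthreat : HasCopy H (insert s(u, v) B))
    (hred : BuilderWinsIn G H (insert s(u, v) R) B r) : BuilderWinsIn G H R B (r + 1) :=
  play huv hred (of_hasCopy_blue hthreat)

theorem force_blue (huv : u ≠ v) (hthreat : HasCopy G (insert s(u, v) R))
    (hblue : BuilderWinsIn G H R (insert s(u, v) B) r) : BuilderWinsIn G H R B (r + 1) :=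
  play huv (of_hasCopy_red hthreat) hblue

end Moves

section BluePath

variable {R B : Set (Sym2 ℕ)} {a b x : ℕ} {l : List ℕ}

theorem of_blue_path_of_red_edge (hpath : IsPathIn B (a :: (l ++ [b])))
    (hx : x ∉ a :: (l ++ [b])) (hxa : s(x, a) ∈ R) :
    BuilderWinsIn (cycleGraph 4) (pathGraph (l.length + 3)) R B 3 := by
  obtain ⟨y, hy⟩ := Infinite.exists_notMem_finset (x :: a :: (l ++ [b])).toFinset
  obtain ⟨hyx, hy⟩ : y ≠ x ∧ y ∉ a :: (l ++ [b]) := by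
    simpa only [List.mem_toFinset, List.mem_cons (b := x), not_or] using hy
  have hab : a ≠ b := hpath.ends_ne
  have threat_head : HasCopy (pathGraph (l.length + 3)) (insert s(y, a) B) :=
    (hpath.cons_insert hy).hasCopy (by simp)
  have threat_tail {z : ℕ} (hz : z ∉ a :: (l ++ [b])) :
      HasCopy (pathGraph (l.length + 3)) (insert s(z, b) B) :=
    (hpath.reverse.cons_insert (by grind)).hasCopy (by simp)
  refine force_red (by grind) threat_head ?_
  refine force_red (by grind) (threat_tail hy) ?_
  refine force_red (by grind) (threat_tail hx) (of_hasCopy_red ?_)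
  exact hasCopy_cycleGraph_four (a := x) (b := a) (c := y) (d := b) (by grind)
    (by simp [hxa]) (by simp [Sym2.eq_swap]) (by simp) (by simp [Sym2.eq_swap])

theorem of_blue_path (hpath : IsPathIn B (a :: (l ++ [b]))) :
    BuilderWinsIn (cycleGraph 4) (pathGraph (l.length + 3)) R B 4 := by
  obtain ⟨x, hx⟩ := Infinite.exists_notMem_finset (a :: (l ++ [b])).toFinset
  rw [List.mem_toFinset] at hx
  exact force_red (List.ne_of_not_mem_cons hx) ((hpath.cons_insert hx).hasCopy (by simp))
    (of_blue_path_of_red_edge hpath hx (Set.mem_insert _ _))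

end BluePath

section CaseB6

variable {R B : Set (Sym2 ℕ)} {a c p q t : ℕ} {l : List ℕ}

theorem of_red_path_of_blue_chord (hpath : IsPathIn B (a :: (l ++ [c]))) (hpqt : [p, q, t].Nodup)
    (hdisj : List.Disjoint [p, q, t] (a :: (l ++ [c]))) (hpq : s(p, q) ∈ B) (hcp : s(c, p) ∈ R)
    (hpa : s(p, a) ∈ R) (haq : s(a, q) ∈ R) (hqt : s(q, t) ∈ R) :
    BuilderWinsIn (cycleGraph 4) (pathGraph (l.length + 5)) R B 2 := by
  obtain ⟨hp, hq, ht⟩ : p ∉ a :: (l ++ [c]) ∧ q ∉ a :: (l ++ [c]) ∧ t ∉ a :: (l ++ [c]) := by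
    simpa only [List.disjoint_cons_left, List.disjoint_nil_left, and_true] using hdisj
  have hac : a ≠ c := hpath.ends_ne
  have red_threat : HasCopy (cycleGraph 4) (insert s(q, c) R) :=
    hasCopy_cycleGraph_four (a := c) (b := p) (c := a) (d := q) (by grind)
      (by simp [hcp]) (by simp [hpa]) (by simp [haq]) (by simp)
  have red_win : HasCopy (cycleGraph 4) (insert s(t, p) R) :=
    hasCopy_cycleGraph_four (a := p) (b := a) (c := q) (d := t) (by grind)
      (by simp [hpa]) (by simp [haq]) (by simp [hqt]) (by simp)
  have blue_win : HasCopy (pathGraph (l.length + 5)) (insert s(t, p) (insert s(q, c) B)) := by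
    have hpath_q := hpath.reverse.cons_insert (x := q) (by grind)
    have hpath_p := hpath_q.cons (x := p) (by grind) (by simp [hpq])
    exact (hpath_p.cons_insert (x := t) (by grind)).hasCopy (by simp)
  exact force_blue (by grind) red_threat
    (force_red (by grind) blue_win (of_hasCopy_red red_win))

end CaseB6

end BuilderWinsIn

theorem builder_wins_case_B6_general {R B : Set (Sym2 ℕ)} {a c p q t : ℕ} {l : List ℕ}
    (hpath : IsPathIn B (a :: (l ++ [c]))) (hpqt : [p, q, t].Nodup)
    (hdisj : List.Disjoint [p, q, t] (a :: (l ++ [c])))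
    (hcp : s(c, p) ∈ R) (hpq : s(p, q) ∈ B) (hqt : s(q, t) ∈ R) :
    BuilderWinsIn (cycleGraph 4) (pathGraph (l.length + 5)) R B 5 := by
  obtain ⟨hp, hq, ht⟩ : p ∉ a :: (l ++ [c]) ∧ q ∉ a :: (l ++ [c]) ∧ t ∉ a :: (l ++ [c]) := by
    simpa only [List.disjoint_cons_left, List.disjoint_nil_left, and_true] using hdisj
  refine .play (u := q) (v := a) (List.ne_of_not_mem_cons hq) ?red ?blue
  case blue =>
    exact .of_blue_path (l := q :: a :: l)
      ((hpath.cons_insert hq).cons (x := p) (by grind) (by simp [hpq]))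
  refine .play (u := p) (v := a) (List.ne_of_not_mem_cons hp) ?red_red ?red_blue
  case red_blue =>
    have hpath_q : IsPathIn (insert s(p, a) B) (q :: p :: a :: (l ++ [c])) :=
      (hpath.cons_insert hp).cons (by grind) (by simp [hpq, Sym2.eq_swap])
    exact .of_blue_path_of_red_edge (l := p :: a :: l) (x := t) hpath_q (by grind)
      (by simp [hqt, Sym2.eq_swap])
  case red_red =>
    exact (BuilderWinsIn.of_red_path_of_blue_chord hpath hpqt hdisj hpq (by simp [hcp])
      (by simp) (by simp [Sym2.eq_swap]) (by simp [hqt])).succ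

/-- Case `B6`: in the online Ramsey game with targets red `C₄` and blue `P₆`,
from the position in which the five edges `v₁v₂, v₂v₃, v₃v₄, v₄v₅, v₅v₆` of a path on
six distinct vertices have been colored blue, blue, red, blue, red respectively,
Builder can force a red copy of `C₄` or a blue copy of `P₆` within at most 6 additional
rounds (so within at most 11 rounds in total). -/
theorem builder_wins_case_B6 (v : Fin 6 → ℕ) (hv : Function.Injective v) :
    BuilderWinsIn (cycleGraph 4) (pathGraph 6)
      {s(v 2, v 3), s(v 4, v 5)}
      {s(v 0, v 1), s(v 1, v 2), s(v 3, v 4)} 6 := by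
  set R : Set (Sym2 ℕ) := {s(v 2, v 3), s(v 4, v 5)}
  set B : Set (Sym2 ℕ) := {s(v 0, v 1), s(v 1, v 2), s(v 3, v 4)}
  have hblue : IsPathIn B [v 0, v 1, v 2] := ⟨by simp [hv.eq_iff], by simp [B]⟩
  have hfive : BuilderWinsIn (cycleGraph 4) (pathGraph 6) R B 5 :=
    builder_wins_case_B6_general (l := [v 1]) (p := v 3) (q := v 4) (t := v 5) hblue
      (by simp [hv.eq_iff]) (by simp [hv.eq_iff]) (by simp [R]) (by simp [B]) (by simp [R])
  exact hfive.succ
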